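/- Every nontrivial quasi-diagram is an iterated expansion of a chord diagram: if α ∈ S_n is a quasi-diagram with α ≠ id, then there exist an integer r ≥ 0, a chord diagram β ∈ S_{n−r}, and positions i_1, …, i_r with i_k ∈ {1, …, n−r+k} for each k, such that α = ι_{i_r}(⋯ ι_{i_2}(ι_{i_1}(β)) ⋯). Moreover, if α is maximal then β can be chosen to be a maximal chord diagram. -/

import Mathlib

/-- The cycle `ϑ_{i,m+1} = (i, i+1, …, m+1)` of `S_{m+1}`; 0-indexed on `Fin (m+1)`, where
`a : Fin (m+1)` corresponds to `i`. -/
def vartheta {m : ℕ} (a : Fin (m + 1)) : Equiv.Perm (Fin (m + 1)) :=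
  Fin.revPerm * (Fin.cycleRange a.rev)⁻¹ * Fin.revPerm

/-- A permutation of `Fin m` regarded as a permutation of `Fin (m+1)` fixing the last point. -/
def castPerm {m : ℕ} (β : Equiv.Perm (Fin m)) : Equiv.Perm (Fin (m + 1)) :=
  β.viaFintypeEmbedding Fin.castSuccEmb

/-- The `i`-expansion `ι_i(β) = ϑ_{i,m+1} β ϑ_{i,m+1}⁻¹` of a quasi-diagram `β ∈ S_m`. -/
def expand {m : ℕ} (a : Fin (m + 1)) (β : Equiv.Perm (Fin m)) : Equiv.Perm (Fin (m + 1)) :=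
  vartheta a * castPerm β * (vartheta a)⁻¹

/-- `IsIterExpansionOf m β k γ` : the permutation `γ ∈ S_k` is an iterated expansion
`ι_{i_r}(⋯ ι_{i_1}(β) ⋯)` of `β ∈ S_m` (with `r = k - m ≥ 0` expansion steps). -/
inductive IsIterExpansionOf : (m : ℕ) → Equiv.Perm (Fin m) → (k : ℕ) → Equiv.Perm (Fin k) → Prop
  | refl (m : ℕ) (β : Equiv.Perm (Fin m)) : IsIterExpansionOf m β m β
  | step (m : ℕ) (β : Equiv.Perm (Fin m)) (k : ℕ) (γ : Equiv.Perm (Fin k)) (a : Fin (k + 1)) :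
      IsIterExpansionOf m β k γ → IsIterExpansionOf m β (k + 1) (expand a γ)

theorem vartheta_last {m : ℕ} (a : Fin (m + 1)) : vartheta a (Fin.last m) = a := by
  simp [vartheta, Equiv.Perm.inv_def]

theorem vartheta_castSucc {m : ℕ} (a : Fin (m + 1)) (j : Fin m) :
    vartheta a j.castSucc = a.succAbove j := by
  simp [vartheta, Equiv.Perm.inv_def, Fin.rev_castSucc, Fin.rev_succAbove]

theorem castPerm_castSucc {m : ℕ} (β : Equiv.Perm (Fin m)) (j : Fin m) :
    castPerm β j.castSucc = (β j).castSucc :=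
  Equiv.Perm.viaFintypeEmbedding_apply_image β Fin.castSuccEmb j

theorem castPerm_last {m : ℕ} (β : Equiv.Perm (Fin m)) :
    castPerm β (Fin.last m) = Fin.last m := by
  apply Equiv.Perm.viaFintypeEmbedding_apply_notMem_range
  rintro ⟨j, hj⟩
  exact (Fin.castSucc_lt_last j).ne hj

theorem expand_self {m : ℕ} (a : Fin (m + 1)) (β : Equiv.Perm (Fin m)) :
    expand a β a = a := by
  have h : (vartheta a)⁻¹ a = Fin.last m := by
    rw [Equiv.Perm.inv_eq_iff_eq, vartheta_last]
  simp only [expand, Equiv.Perm.mul_apply, h, castPerm_last, vartheta_last]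

theorem expand_succAbove {m : ℕ} (a : Fin (m + 1)) (β : Equiv.Perm (Fin m)) (j : Fin m) :
    expand a β (a.succAbove j) = a.succAbove (β j) := by
  have h : (vartheta a)⁻¹ (a.succAbove j) = j.castSucc := by
    rw [Equiv.Perm.inv_eq_iff_eq, vartheta_castSucc]
  simp only [expand, Equiv.Perm.mul_apply, h, castPerm_castSucc, vartheta_castSucc]

theorem rotate_succAbove {m : ℕ} (a : Fin (m + 1)) (j : Fin m) :
    finRotate (m + 1) (a.succAbove j) = a.succAbove (finRotate m j) ∨
    (finRotate (m + 1) (a.succAbove j) = a ∧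
      finRotate (m + 1) a = a.succAbove (finRotate m j)) := by
  obtain _ | k := m
  · exact j.elim0
  · have ha := a.isLt
    have hj := j.isLt
    simp only [Fin.ext_iff, coe_finRotate, Fin.succAbove, Fin.lt_def, Fin.val_castSucc,
      apply_ite Fin.val, Fin.val_succ, Fin.val_last]
    split_ifs <;> omega

theorem exists_reduction {m : ℕ} (α : Equiv.Perm (Fin (m + 1))) (hα : ∀ i, α (α i) = i)
    (a : Fin (m + 1)) (ha : α a = a) :
    ∃ β : Equiv.Perm (Fin m), (∀ j, β (β j) = j) ∧ α = expand a β := by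
  have key : ∀ j : Fin m, ∃ y, a.succAbove y = α (a.succAbove j) := by
    intro j
    apply Fin.exists_succAbove_eq
    intro h
    have : a.succAbove j = a := α.injective (h.trans ha.symm)
    exact Fin.succAbove_ne a j this
  choose b hb using key
  have hinv : Function.Involutive b := by
    intro j
    apply Fin.succAbove_right_injective (p := a)
    rw [hb, hb, hα]
  refine ⟨hinv.toPerm, hinv, ?_⟩
  ext1 x
  rcases eq_or_ne x a with rfl | hx
  · rw [ha, expand_self]
  · obtain ⟨y, rfl⟩ := Fin.exists_succAbove_eq hx
    rw [expand_succAbove, ← hb]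
    rfl

theorem maximal_of_expand {m : ℕ} (a : Fin (m + 1)) (β : Equiv.Perm (Fin m))
    (h : ∀ x y : Fin (m + 1), (finRotate (m + 1) * expand a β).SameCycle x y) :
    ∀ x y : Fin m, (finRotate m * β).SameCycle x y := by
  intro x y
  have inv : ∀ k : ℕ,
      (∃ z, ((finRotate (m + 1) * expand a β) ^ k) (a.succAbove x) = a.succAbove z ∧
        (finRotate m * β).SameCycle x z) ∨
      (((finRotate (m + 1) * expand a β) ^ k) (a.succAbove x) = a ∧
        ∃ z, finRotate (m + 1) a = a.succAbove z ∧ (finRotate m * β).SameCycle x z) := by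
    intro k
    induction k with
    | zero => exact Or.inl ⟨x, rfl, Equiv.Perm.SameCycle.refl _ _⟩
    | succ k ih =>
      rw [pow_succ', Equiv.Perm.mul_apply]
      rcases ih with ⟨z, h1, h2⟩ | ⟨h1, z, h2, h3⟩
      · rw [h1, Equiv.Perm.mul_apply, expand_succAbove]
        have h4 : (finRotate m * β).SameCycle x (finRotate m (β z)) :=
          h2.trans ⟨1, by simp⟩
        rcases rotate_succAbove a (β z) with h5 | ⟨h5, h6⟩
        · exact Or.inl ⟨_, h5, h4⟩
        · exact Or.inr ⟨h5, _, h6, h4⟩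
      · rw [h1, Equiv.Perm.mul_apply, expand_self]
        exact Or.inl ⟨z, h2, h3⟩
  obtain ⟨k, -, -, hk⟩ := (h (a.succAbove x) (a.succAbove y)).exists_pow_eq
  rcases inv k with ⟨z, h1, h2⟩ | ⟨h1, -⟩
  · have : y = z := Fin.succAbove_right_injective (hk.symm.trans h1)
    rwa [this]
  · exact absurd (hk.symm.trans h1) (Fin.succAbove_ne a y)

theorem exists_chord (n : ℕ) (α : Equiv.Perm (Fin n)) (hα : ∀ i, α (α i) = i) :
    ∃ (m : ℕ) (β : Equiv.Perm (Fin m)),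
      (∀ j, β (β j) = j) ∧ (∀ j, β j ≠ j) ∧
      ((∀ x y : Fin n, (finRotate n * α).SameCycle x y) →
        ∀ x y : Fin m, (finRotate m * β).SameCycle x y) ∧
      IsIterExpansionOf m β n α := by
  induction n with
  | zero => exact ⟨0, α, hα, fun j => j.elim0, id, .refl _ _⟩
  | succ n ih =>
    by_cases hf : ∀ j, α j ≠ j
    · exact ⟨n + 1, α, hα, hf, id, .refl _ _⟩
    · push Not at hf
      obtain ⟨a, ha⟩ := hf
      obtain ⟨γ, hγ, rfl⟩ := exists_reduction α hα a ha
      obtain ⟨m, β, h1, h2, h3, h4⟩ := ih γ hγ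
      exact ⟨m, β, h1, h2, fun h => h3 (maximal_of_expand a γ h), .step _ _ _ _ a h4⟩

/-- Every nontrivial quasi-diagram `α ∈ S_n` (an involution of `Fin n`
with `α ≠ id`; `ζ = finRotate n`) is an iterated expansion of a chord diagram (a fixed-point
free involution); moreover if `α` is maximal (one orbit of `ζα`) then the chord diagram can
be chosen maximal. -/
theorem stmt_15 (n : ℕ) (hn : 0 < n) (α : Equiv.Perm (Fin n))
    (hα : ∀ i, α (α i) = i) (hne : α ≠ 1) :
    (∃ (m : ℕ) (β : Equiv.Perm (Fin m)),
      (∀ j, β (β j) = j) ∧ (∀ j, β j ≠ j) ∧ IsIterExpansionOf m β n α) ∧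
    ((∀ x y : Fin n, (finRotate n * α).SameCycle x y) →
      ∃ (m : ℕ) (β : Equiv.Perm (Fin m)),
        (∀ j, β (β j) = j) ∧ (∀ j, β j ≠ j) ∧
        (∀ x y : Fin m, (finRotate m * β).SameCycle x y) ∧
        IsIterExpansionOf m β n α) := by
  obtain ⟨m, β, h1, h2, h3, h4⟩ := exists_chord n α hα
  exact ⟨⟨m, β, h1, h2, h4⟩, fun h => ⟨m, β, h1, h2, h3 h, h4⟩⟩
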